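/- For every integer n ≥ 2, σ_n = (n / 2^{n-1}) · Σ_{0 ≤ r < n/2} (-1)^r (n - 2r)^{n-1} / (r! (n - r)!). -/

import Mathlib

open MeasureTheory

noncomputable def sigma (n : ℕ) : ℝ :=
  (2 / Real.pi) * ∫ t in Set.Ioi (0:ℝ), (Real.sin t / t) ^ n

open Real Set
open scoped fwdDiff Nat

/-!
Multiplying `g` by `sinc` averages its cosine transform over `[a - 1, a + 1]`, because
`sinc t * cos (a * t)` is the mean of `cos (b * t)` over `b ∈ [a - 1, a + 1]`. Averaging an iterated
forward difference with step `2` of a truncated power `x₊ᵏ` raises both the order of the difference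
and the exponent by one. Hence the cosine transform of `sincⁿ` at `a` is a constant times the `n`-th
difference of `x₊ⁿ⁻¹` at `a - n`, by induction from `n = 2`; at `a = 0` the truncation cuts the
binomial expansion of this difference down to the terms with `2 * r < n`.

For `n = 2`, the function `4 * sin t ^ 2 * cos (a * t)` is the second difference in `b` of
`1 - cos (b * t)`, so one needs `∫₀^∞ (1 - cos (b * t)) / t ^ 2 dt = π * |b| / 2`. Writing
`1 / t ^ 2 = ∫₀^∞ s * exp (-s * t) ds` and exchanging the integrals turns it (for `b = 1`) into the
arctangent integral.
-/

theorem fwdDiff_iter_eq_sum_neg_one_pow_mul {M R : Type*} [AddCommMonoid M] [Ring R]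
    (h : M) (f : M → R) (n : ℕ) (y : M) :
    (Δ_[h])^[n] f y =
      ∑ r ∈ Finset.range (n + 1), (-1) ^ r * (n.choose r : R) * f (y + (n - r) • h) := by
  rw [fwdDiff_iter_eq_sum_shift, ← Finset.sum_flip]
  refine Finset.sum_congr rfl fun r hr ↦ ?_
  have hrn : r ≤ n := Finset.mem_range_succ_iff.mp hr
  rw [Nat.sub_sub_self hrn, Nat.choose_symm hrn, zsmul_eq_mul]
  push_cast
  rfl

theorem hasDerivAt_fwdDiff_iter {𝕜 E : Type*} [NontriviallyNormedField 𝕜]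
    [NormedAddCommGroup E] [NormedSpace 𝕜 E] {f f' : 𝕜 → E} (hf : ∀ x, HasDerivAt f (f' x) x)
    (h : 𝕜) (n : ℕ) (x : 𝕜) : HasDerivAt ((Δ_[h])^[n] f) ((Δ_[h])^[n] f' x) x := by
  induction n generalizing x with
  | zero => exact hf x
  | succ n ih =>
    simp only [Function.iterate_succ_apply']
    exact ((ih (x + h)).comp_add_const x h).sub (ih x)

theorem continuous_fwdDiff_iter {M G : Type*} [AddCommMonoid M] [TopologicalSpace M]
    [ContinuousAdd M] [AddCommGroup G] [TopologicalSpace G] [IsTopologicalAddGroup G]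
    {f : M → G} (hf : Continuous f) (h : M) (n : ℕ) : Continuous ((Δ_[h])^[n] f) := by
  induction n with
  | zero => exact hf
  | succ n ih =>
    rw [Function.iterate_succ_apply']
    exact (ih.comp (continuous_add_const h)).sub ih

theorem intervalIntegral_fwdDiff_iter {E : Type*} [NormedAddCommGroup E] [NormedSpace ℝ E]
    [CompleteSpace E] {f f' : ℝ → E} (hf : ∀ x, HasDerivAt f (f' x) x) (hf' : Continuous f')
    (h : ℝ) (n : ℕ) (a : ℝ) :
    ∫ x in a..a + h, (Δ_[h])^[n] f' x = (Δ_[h])^[n + 1] f a := by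
  rw [Function.iterate_succ_apply']
  exact intervalIntegral.integral_eq_sub_of_hasDerivAt
    (fun x _ ↦ hasDerivAt_fwdDiff_iter hf h n x)
    ((continuous_fwdDiff_iter hf' h n).intervalIntegrable _ _)

theorem fwdDiff_iter_integral {M X E : Type*} [AddCommMonoid M] [MeasurableSpace X]
    {μ : Measure X} [NormedAddCommGroup E] [NormedSpace ℝ E] {f : M → X → E}
    (hf : ∀ b, Integrable (f b) μ) (h : M) (n : ℕ) (b : M) :
    (Δ_[h])^[n] (fun c ↦ ∫ x, f c x ∂μ) b = ∫ x, (Δ_[h])^[n] (f · x) b ∂μ := by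
  simp only [fwdDiff_iter_eq_sum_shift, ← Int.cast_smul_eq_zsmul ℝ]
  rw [integral_finsetSum _ fun k _ ↦ (hf (b + k • h)).fun_smul _]
  simp only [integral_smul]

theorem hasDerivAt_posPart_pow {k : ℕ} (hk : k ≠ 0) (x : ℝ) :
    HasDerivAt (fun y : ℝ ↦ y⁺ ^ (k + 1)) ((k + 1) * x⁺ ^ k) x := by
  refine hasDerivAt_of_hasDerivAt_of_ne' (f := fun y : ℝ ↦ y⁺ ^ (k + 1))
    (g := fun y : ℝ ↦ (k + 1) * y⁺ ^ k) (x := 0) (fun y hy ↦ ?_)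
    (continuous_posPart.pow _).continuousAt ((continuous_posPart.pow _).const_mul _).continuousAt x
  rcases hy.lt_or_gt with hneg | hpos
  · rw [posPart_eq_zero.mpr hneg.le, zero_pow hk, mul_zero]
    refine (hasDerivAt_const y (0 : ℝ)).congr_of_eventuallyEq ?_
    filter_upwards [eventually_lt_nhds hneg] with z hz
    rw [posPart_eq_zero.mpr hz.le, zero_pow k.succ_ne_zero]
  · rw [posPart_eq_self.mpr hpos.le]
    have hpow : HasDerivAt (fun z : ℝ ↦ z ^ (k + 1)) ((k + 1) * y ^ k) y := by
      simpa using hasDerivAt_pow (k + 1) y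
    refine hpow.congr_of_eventuallyEq ?_
    filter_upwards [eventually_gt_nhds hpos] with z hz
    rw [posPart_eq_self.mpr hz.le]

theorem intervalIntegral_fwdDiff_iter_posPart_pow {k : ℕ} (hk : k ≠ 0) (h : ℝ) (n : ℕ) (a : ℝ) :
    ∫ x in a..a + h, (Δ_[h])^[n] (fun y : ℝ ↦ y⁺ ^ k) x =
      (Δ_[h])^[n + 1] (fun y : ℝ ↦ y⁺ ^ (k + 1)) a / (k + 1) := by
  have hderiv (x : ℝ) :
      HasDerivAt ((k + 1 : ℝ)⁻¹ • fun y : ℝ ↦ y⁺ ^ (k + 1)) (x⁺ ^ k) x :=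
    ((hasDerivAt_posPart_pow hk x).const_smul _).congr_deriv
      (inv_mul_cancel_left₀ (by positivity) _)
  rw [intervalIntegral_fwdDiff_iter hderiv (continuous_posPart.pow k), fwdDiff_iter_const_smul,
    Pi.smul_apply, smul_eq_mul, inv_mul_eq_div]

theorem fwdDiff_iter_posPart_pow_neg {k : ℕ} (hk : k ≠ 0) (n : ℕ) :
    (Δ_[(2 : ℝ)])^[n] (fun y : ℝ ↦ y⁺ ^ k) (-n) =
      ∑ r ∈ Finset.range ((n + 1) / 2), (-1) ^ r * (n.choose r : ℝ) * ((n : ℝ) - 2 * r) ^ k := by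
  have hnode : ∀ r ≤ n, -(n : ℝ) + (n - r) • (2 : ℝ) = n - 2 * r := fun r hr ↦ by
    rw [nsmul_eq_mul, Nat.cast_sub hr]
    ring
  rw [fwdDiff_iter_eq_sum_neg_one_pow_mul,
    ← Finset.sum_subset (Finset.range_subset_range.mpr (by omega : (n + 1) / 2 ≤ n + 1))]
  · refine Finset.sum_congr rfl fun r hr ↦ ?_
    rw [Finset.mem_range] at hr
    have hnonneg : (0 : ℝ) ≤ n - 2 * r := sub_nonneg.mpr (by exact_mod_cast (by omega : 2 * r ≤ n))
    rw [hnode r (by omega), posPart_eq_self.mpr hnonneg]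
  · intro r hr hr'
    rw [Finset.mem_range] at hr hr'
    have hnonpos : (n : ℝ) - 2 * r ≤ 0 := sub_nonpos.mpr (by exact_mod_cast (by omega : n ≤ 2 * r))
    rw [hnode r (by omega), posPart_eq_zero.mpr hnonpos, zero_pow hk, mul_zero]

theorem sinc_sq_le_two_mul_inv (t : ℝ) : sinc t ^ 2 ≤ 2 * (1 + t ^ 2)⁻¹ := by
  have hsin : t * sinc t = sin t := by
    rcases eq_or_ne t 0 with rfl | ht
    · simp
    · rw [sinc_of_ne_zero ht, mul_div_cancel₀ _ ht]
  have hsinc : sinc t ^ 2 ≤ 1 := (sq_le_one_iff_abs_le_one _).mpr (abs_sinc_le_one t)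
  rw [← div_eq_mul_inv, le_div_iff₀ (by positivity)]
  calc sinc t ^ 2 * (1 + t ^ 2) = sinc t ^ 2 + (t * sinc t) ^ 2 := by ring
    _ ≤ 1 + 1 := add_le_add hsinc (hsin ▸ sin_sq_le_one t)
    _ = 2 := by norm_num

theorem integrable_sinc_pow {n : ℕ} (hn : 2 ≤ n) : Integrable fun t ↦ sinc t ^ n := by
  refine (integrable_inv_one_add_sq.const_mul 2).mono'
    (continuous_sinc.pow n).aestronglyMeasurable (.of_forall fun t ↦ ?_)
  calc ‖sinc t ^ n‖ = |sinc t| ^ n := by rw [norm_pow, norm_eq_abs]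
    _ ≤ |sinc t| ^ 2 := pow_le_pow_of_le_one (abs_nonneg _) (abs_sinc_le_one t) hn
    _ = sinc t ^ 2 := sq_abs _
    _ ≤ 2 * (1 + t ^ 2)⁻¹ := sinc_sq_le_two_mul_inv t

theorem one_sub_cos_mul_div_sq (b : ℝ) {t : ℝ} (ht : t ≠ 0) :
    (1 - cos (b * t)) / t ^ 2 = b ^ 2 / 2 * sinc (b / 2 * t) ^ 2 := by
  rcases eq_or_ne b 0 with rfl | hb
  · simp
  · rw [sinc_of_ne_zero (by positivity), div_pow, sin_sq_eq_half_sub]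
    field_simp

theorem integrableOn_one_sub_cos_mul_div_sq_Ioi (b : ℝ) :
    IntegrableOn (fun t ↦ (1 - cos (b * t)) / t ^ 2) (Ioi 0) := by
  rcases eq_or_ne b 0 with rfl | hb
  · simp
  · have hsinc : Integrable fun t ↦ b ^ 2 / 2 * sinc (b / 2 * t) ^ 2 :=
      ((integrable_sinc_pow le_rfl).comp_mul_left' (by positivity)).const_mul _
    exact hsinc.integrableOn.congr_fun
      (fun t ht ↦ (one_sub_cos_mul_div_sq b (ne_of_gt ht)).symm) measurableSet_Ioi

theorem sinc_mul_cos_eq_integral (a t : ℝ) :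
    sinc t * cos (a * t) = 1 / 2 * ∫ b in (a - 1)..(a + 1), cos (b * t) := by
  rcases eq_or_ne t 0 with rfl | ht
  · norm_num
  · rw [intervalIntegral.integral_comp_mul_right cos ht, integral_cos, sub_mul, add_mul, sin_add,
      sin_sub, smul_eq_mul, one_mul, sinc_of_ne_zero ht]
    ring

theorem sinc_sq_mul_cos_eq_fwdDiff (a : ℝ) {t : ℝ} (ht : t ≠ 0) :
    sinc t ^ 2 * cos (a * t) =
      1 / 4 * (Δ_[(2 : ℝ)])^[2] (fun b ↦ (1 - cos (b * t)) / t ^ 2) (a - 2) := by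
  have hcos : 4 * sin t ^ 2 * cos (a * t) =
      2 * cos (a * t) - cos ((a + 2) * t) - cos ((a - 2) * t) := by
    rw [add_mul, sub_mul, cos_add, cos_sub, cos_two_mul, sin_sq]
    ring
  have hsq : sinc t ^ 2 = sin t ^ 2 / t ^ 2 := by rw [sinc_of_ne_zero ht, div_pow]
  simp only [Function.iterate_succ_apply, Function.iterate_zero_apply, fwdDiff]
  rw [show a - 2 + 2 + 2 = a + 2 by ring, show a - 2 + 2 = a by ring, hsq]
  linear_combination hcos / (4 * t ^ 2)

section Laplace

variable {s : ℝ}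

theorem integral_mul_exp_neg_mul_Ioi {t : ℝ} (ht : 0 < t) :
    ∫ s in Ioi 0, s * exp (-(s * t)) = 1 / t ^ 2 := by
  have hGamma := integral_rpow_mul_exp_neg_mul_Ioi (a := 2) two_pos ht
  norm_num [Gamma_two] at hGamma
  simpa [mul_comm t] using hGamma

theorem integrableOn_exp_neg_mul_mul_cos_Ioi (hs : 0 < s) (b : ℝ) :
    IntegrableOn (fun t ↦ exp (-(s * t)) * cos (b * t)) (Ioi 0) := by
  refine (integrableOn_exp_mul_Ioi (neg_lt_zero.mpr hs) 0).mono' (by fun_prop)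
    (.of_forall fun t ↦ ?_)
  rw [norm_mul, norm_eq_abs, abs_exp, neg_mul]
  exact mul_le_of_le_one_right (exp_nonneg _) (abs_cos_le_one _)

theorem integral_exp_neg_mul_mul_cos_Ioi (hs : 0 < s) (b : ℝ) :
    ∫ t in Ioi 0, exp (-(s * t)) * cos (b * t) = s / (s ^ 2 + b ^ 2) := by
  have hre : (-s + b * Complex.I : ℂ).re < 0 := by simpa using hs
  have hexp (t : ℝ) : exp (-(s * t)) * cos (b * t) =
      (Complex.exp ((-s + b * Complex.I) * t)).re := by
    simp [Complex.exp_re]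
  simp_rw [hexp]
  rw [← RCLike.re_eq_complex_re, integral_re (integrableOn_exp_mul_complex_Ioi hre 0),
    integral_exp_mul_complex_Ioi hre, RCLike.re_eq_complex_re]
  simp [Complex.div_re, Complex.normSq_apply, sq]

theorem integrableOn_mul_one_sub_cos_mul_exp_neg_Ioi (hs : 0 < s) :
    IntegrableOn (fun t ↦ s * (1 - cos t) * exp (-(s * t))) (Ioi 0) := by
  have hcos := integrableOn_exp_neg_mul_mul_cos_Ioi hs
  exact (((hcos 0).sub (hcos 1)).const_mul s).congr (.of_forall fun t ↦ by simp; ring)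

theorem integral_mul_one_sub_cos_mul_exp_neg_Ioi (hs : 0 < s) :
    ∫ t in Ioi 0, s * (1 - cos t) * exp (-(s * t)) = (1 + s ^ 2)⁻¹ := by
  have hsplit (t : ℝ) : s * (1 - cos t) * exp (-(s * t)) =
      s * (exp (-(s * t)) * cos (0 * t) - exp (-(s * t)) * cos (1 * t)) := by
    rw [zero_mul, cos_zero, one_mul]
    ring
  simp_rw [hsplit]
  rw [integral_const_mul, integral_sub (integrableOn_exp_neg_mul_mul_cos_Ioi hs 0)
    (integrableOn_exp_neg_mul_mul_cos_Ioi hs 1), integral_exp_neg_mul_mul_cos_Ioi hs,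
    integral_exp_neg_mul_mul_cos_Ioi hs]
  field_simp
  ring

theorem integrable_prod_mul_one_sub_cos_mul_exp_neg :
    Integrable (Function.uncurry fun s t : ℝ ↦ s * (1 - cos t) * exp (-(s * t)))
      ((volume.restrict (Ioi 0)).prod (volume.restrict (Ioi 0))) := by
  rw [integrable_prod_iff (by apply Continuous.aestronglyMeasurable; fun_prop)]
  constructor
  · filter_upwards [ae_restrict_mem measurableSet_Ioi] with s hs
    exact integrableOn_mul_one_sub_cos_mul_exp_neg_Ioi hs
  · refine (integrable_inv_one_add_sq.integrableOn (s := Ioi 0)).congr ?_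
    filter_upwards [ae_restrict_mem measurableSet_Ioi] with s hs
    rw [← integral_mul_one_sub_cos_mul_exp_neg_Ioi hs]
    congr 1 with t
    have hcos : 0 ≤ 1 - cos t := sub_nonneg.mpr (cos_le_one t)
    have hs : 0 < s := hs
    exact (norm_of_nonneg (by positivity)).symm

theorem integral_one_sub_cos_div_sq_Ioi : ∫ t in Ioi 0, (1 - cos t) / t ^ 2 = π / 2 := by
  have hinner : ∀ t ∈ Ioi (0 : ℝ),
      (1 - cos t) / t ^ 2 = ∫ s in Ioi 0, s * (1 - cos t) * exp (-(s * t)) := fun t ht ↦ by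
    simp_rw [mul_right_comm _ (1 - cos t), integral_mul_const]
    rw [integral_mul_exp_neg_mul_Ioi ht, one_div_mul_eq_div]
  calc ∫ t in Ioi 0, (1 - cos t) / t ^ 2
      = ∫ t in Ioi 0, ∫ s in Ioi 0, s * (1 - cos t) * exp (-(s * t)) :=
        setIntegral_congr_fun measurableSet_Ioi hinner
    _ = ∫ s in Ioi 0, ∫ t in Ioi 0, s * (1 - cos t) * exp (-(s * t)) :=
        (integral_integral_swap integrable_prod_mul_one_sub_cos_mul_exp_neg).symm
    _ = ∫ s in Ioi 0, (1 + s ^ 2)⁻¹ :=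
        setIntegral_congr_fun measurableSet_Ioi fun s ↦ integral_mul_one_sub_cos_mul_exp_neg_Ioi
    _ = π / 2 := by rw [integral_Ioi_inv_one_add_sq, arctan_zero, sub_zero]

theorem integral_one_sub_cos_mul_div_sq_Ioi (b : ℝ) :
    ∫ t in Ioi 0, (1 - cos (b * t)) / t ^ 2 = π / 2 * |b| := by
  rcases eq_or_ne b 0 with rfl | hb
  · simp
  have hscale (t : ℝ) : (1 - cos (b * t)) / t ^ 2 =
      |b| ^ 2 * ((1 - cos (|b| * t)) / (|b| * t) ^ 2) := by
    have hcos : cos (|b| * t) = cos (b * t) := by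
      rcases abs_choice b with h | h <;> simp [h]
    rw [hcos, mul_pow, sq_abs]
    field_simp
  simp_rw [hscale]
  rw [integral_const_mul, integral_comp_mul_left_Ioi (fun t ↦ (1 - cos t) / t ^ 2) 0
    (abs_pos.mpr hb), mul_zero, integral_one_sub_cos_div_sq_Ioi, smul_eq_mul]
  field_simp

end Laplace

/-- The Fourier cosine transform `a ↦ ∫₀^∞ g(t) cos(at) dt` of `g`, without normalizing factor.
The value at `a = 0` of the transform of `sincⁿ` is `π σₙ / 2`. -/
noncomputable def cosTransform (g : ℝ → ℝ) (a : ℝ) : ℝ :=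
  ∫ t in Ioi 0, g t * cos (a * t)

theorem cosTransform_mul_sinc {g : ℝ → ℝ} (hg : IntegrableOn g (Ioi 0)) (a : ℝ) :
    cosTransform (fun t ↦ g t * sinc t) a = 1 / 2 * ∫ b in (a - 1)..(a + 1), cosTransform g b := by
  have hfubini : Integrable (Function.uncurry fun b t : ℝ ↦ g t * cos (b * t))
      ((volume.restrict (uIoc (a - 1) (a + 1))).prod (volume.restrict (Ioi 0))) := by
    rw [uIoc_of_le (by linarith)]
    refine (hg.comp_snd _).mul_bdd (c := 1) ?_ (.of_forall fun p ↦ abs_cos_le_one _)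
    exact Continuous.aestronglyMeasurable (by fun_prop)
  simp only [cosTransform]
  rw [intervalIntegral_integral_swap hfubini, ← integral_const_mul]
  congr 1 with t
  rw [mul_assoc, sinc_mul_cos_eq_integral, intervalIntegral.integral_const_mul, mul_left_comm]

theorem cosTransform_sinc_sq (a : ℝ) :
    cosTransform (fun t ↦ sinc t ^ 2) a =
      π / 4 * (Δ_[(2 : ℝ)])^[2] (fun y : ℝ ↦ y⁺) (a - 2) := by
  have habs (y : ℝ) : |y| = 2 * y⁺ - y := by
    rw [eq_sub_iff_add_eq, abs_add_eq_two_nsmul_posPart, two_nsmul, two_mul]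
  calc cosTransform (fun t ↦ sinc t ^ 2) a
      = ∫ t in Ioi 0, 1 / 4 * (Δ_[(2 : ℝ)])^[2] (fun b ↦ (1 - cos (b * t)) / t ^ 2) (a - 2) :=
        setIntegral_congr_fun measurableSet_Ioi fun t ht ↦
          sinc_sq_mul_cos_eq_fwdDiff a (ne_of_gt ht)
    _ = 1 / 4 * (Δ_[(2 : ℝ)])^[2] (fun b ↦ π / 2 * |b|) (a - 2) := by
        simp_rw [integral_const_mul,
          ← fwdDiff_iter_integral integrableOn_one_sub_cos_mul_div_sq_Ioi,
          integral_one_sub_cos_mul_div_sq_Ioi]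
    _ = π / 4 * (Δ_[(2 : ℝ)])^[2] (fun y : ℝ ↦ y⁺) (a - 2) := by
        simp only [Function.iterate_succ_apply, Function.iterate_zero_apply, fwdDiff, habs]
        ring

theorem cosTransform_sinc_pow {m : ℕ} (hm : 1 ≤ m) (a : ℝ) :
    cosTransform (fun t ↦ sinc t ^ (m + 1)) a =
      π / (2 ^ (m + 1) * m !) * (Δ_[(2 : ℝ)])^[m + 1] (fun y : ℝ ↦ y⁺ ^ m) (a - (m + 1)) := by
  induction m, hm using Nat.le_induction generalizing a with
  | base =>
    rw [cosTransform_sinc_sq]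
    norm_num
  | succ m hm ih =>
    have hint : IntegrableOn (fun t ↦ sinc t ^ (m + 1)) (Ioi 0) :=
      (integrable_sinc_pow (by omega)).integrableOn
    have hlower : a - 1 - (m + 1 : ℝ) = a - ((m + 1 : ℕ) + 1) := by push_cast; ring
    have hupper : a + 1 - (m + 1 : ℝ) = a - ((m + 1 : ℕ) + 1) + 2 := by push_cast; ring
    simp_rw [pow_succ _ (m + 1)]
    rw [cosTransform_mul_sinc hint]
    simp_rw [ih]
    rw [intervalIntegral.integral_const_mul,
      intervalIntegral.integral_comp_sub_right (fun x ↦ (Δ_[(2 : ℝ)])^[m + 1] (· ⁺ ^ m) x),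
      hlower, hupper, intervalIntegral_fwdDiff_iter_posPart_pow (by omega), Nat.factorial_succ]
    push_cast
    field_simp

theorem sigma_eq_cosTransform (n : ℕ) :
    sigma n = 2 / π * cosTransform (fun t ↦ sinc t ^ n) 0 := by
  have hsinc : ∀ t ∈ Ioi (0 : ℝ), (sin t / t) ^ n = sinc t ^ n * cos (0 * t) := fun t ht ↦ by
    rw [sinc_of_ne_zero (ne_of_gt ht), zero_mul, cos_zero, mul_one]
  rw [sigma, cosTransform, setIntegral_congr_fun measurableSet_Ioi hsinc]

theorem sigma_formula (n : ℕ) (hn : 2 ≤ n) :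
    sigma n = ((n : ℝ) / 2 ^ (n - 1)) *
      ∑ r ∈ Finset.range ((n + 1) / 2),
        (-1 : ℝ) ^ r * ((n : ℝ) - 2 * r) ^ (n - 1) /
          ((Nat.factorial r : ℝ) * (Nat.factorial (n - r) : ℝ)) := by
  obtain ⟨m, rfl⟩ : ∃ m, n = m + 1 := ⟨n - 1, by omega⟩
  rw [sigma_eq_cosTransform, cosTransform_sinc_pow (by omega), zero_sub, ← Nat.cast_succ,
    fwdDiff_iter_posPart_pow_neg (by omega), Nat.add_sub_cancel]
  simp only [Finset.mul_sum]
  refine Finset.sum_congr rfl fun r hr ↦ ?_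
  have hr : r ≤ m + 1 := by rw [Finset.mem_range] at hr; omega
  rw [Nat.cast_choose ℝ hr, Nat.factorial_succ]
  push_cast
  field_simp
  ring
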